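/- arXiv:2605.21044 — 2 statements merged into one kernel-verified Lean document; each statement's English description precedes it below -/
import Mathlib

section
/- Failure of Korn's second inequality in L^1 (Ornstein): Let Ω be the open unit ball of ℝ². There exists no constant C > 0 such that for every smooth compactly supported vector field u : ℝ² → ℝ² with support contained in Ω, the infimum over antisymmetric 2×2 real matrices A of the integral over Ω of ‖Du(x) − A‖_F dx is bounded by C times the integral over Ω of ‖(Du(x) + Du(x)ᵀ)/2‖_F dx. Equivalently, for every C > 0 there exists such a smooth compactly supported u with inf_A ∫_Ω ‖Du − A‖_F dx > C ∫_Ω ‖(Du + Duᵀ)/2‖_F dx. -/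
open Matrix MeasureTheory

/-- The Jacobian matrix of `u : ℝ² → ℝ²` at `x`: `(jacobian u x) i j = ∂uᵢ/∂xⱼ (x)`. -/
noncomputable def jacobian (u : EuclideanSpace ℝ (Fin 2) → EuclideanSpace ℝ (Fin 2))
    (x : EuclideanSpace ℝ (Fin 2)) : Matrix (Fin 2) (Fin 2) ℝ :=
  fun i j => fderiv ℝ u x (EuclideanSpace.single j 1) i

/-- Frobenius norm of a real `2 × 2` matrix. -/
noncomputable def frobNorm (M : Matrix (Fin 2) (Fin 2) ℝ) : ℝ :=
  Real.sqrt (∑ i, ∑ j, (M i j) ^ 2)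


namespace KornAux

open MeasureTheory Set Filter Topology

/-- Partial derivatives of a scalar function on the plane. -/
noncomputable def fx (f : ℝ × ℝ → ℝ) (p : ℝ × ℝ) : ℝ := fderiv ℝ f p (1, 0)
noncomputable def fy (f : ℝ × ℝ → ℝ) (p : ℝ × ℝ) : ℝ := fderiv ℝ f p (0, 1)

/-- Half-open box. -/
def bx (w h : ℝ) : Set (ℝ × ℝ) := Ioc 0 w ×ˢ Ioc 0 h

/-- Smooth functions, vanishing near the complement of the open box. -/
def Tst (w h : ℝ) (f : ℝ × ℝ → ℝ) : Prop :=
  ContDiff ℝ (⊤ : ℕ∞) f ∧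
    ∀ p : ℝ × ℝ, ¬ (0 < p.1 ∧ p.1 < w ∧ 0 < p.2 ∧ p.2 < h) → ∀ᶠ q in 𝓝 p, f q = 0

noncomputable def Fz (K a b : ℝ) : ℝ := K * |a + b| - |a| - |b|

/-- The integrand. -/
noncomputable def phi (K a b : ℝ) (f g : ℝ × ℝ → ℝ) (p : ℝ × ℝ) : ℝ :=
  K * (|fx f p| + |fy g p| + |(a + fy f p) + (b + fx g p)|) - |a + fy f p| - |b + fx g p|

def P (K a b w h v : ℝ) : Prop :=
  ∃ f g, Tst w h f ∧ Tst w h g ∧ ∫ p in bx w h, phi K a b f g p ≤ v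

lemma bump_exists (δ : ℝ) (hδ : 0 < δ) :
    ∃ (b B : ℝ → ℝ) (e C : ℝ), 0 < e ∧ e < 1 / 2 ∧ ContDiff ℝ (⊤ : ℕ∞) b ∧
      ContDiff ℝ (⊤ : ℕ∞) B ∧ (∀ t, HasDerivAt B (b t) t) ∧ (∀ t, 0 ≤ b t) ∧ (∀ t, b t ≤ 1) ∧
      (∀ t < e, b t = 0) ∧ (∀ t > 1 - e, b t = 0) ∧ (∀ t < e, B t = 0) ∧
      (∀ t > 1 - e, B t = B 1) ∧ (∀ t, 0 ≤ B t) ∧ (∀ t, B t ≤ 1) ∧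
      (∫ t in Ioc (0 : ℝ) 1, (1 - b t) ≤ δ) ∧ (∀ t, |deriv b t| ≤ C) := by
  obtain ⟨d, hd0, hd1, hd2⟩ : ∃ d : ℝ, 0 < d ∧ d ≤ δ / 2 ∧ d < 1 / 2 :=
    ⟨min (δ / 2) (1 / 4), by positivity, min_le_left _ _,
      lt_of_le_of_lt (min_le_right _ _) (by norm_num)⟩
  let b : ContDiffBump (1 / 2 : ℝ) := ⟨1 / 2 - d, 1 / 2 - d / 2, by linarith, by linarith⟩
  have hb : ContDiff ℝ (⊤ : ℕ∞) b := b.contDiff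
  have hbc : Continuous b := b.continuous
  have hD : ∀ t, HasDerivAt (fun t => ∫ s in (0 : ℝ)..t, b s) (b t) t := fun t =>
    intervalIntegral.integral_hasDerivAt_right (hbc.intervalIntegrable _ _)
      (hbc.stronglyMeasurableAtFilter _ _) hbc.continuousAt
  have hz1 : ∀ t < d / 2, b t = 0 := fun t ht => b.zero_of_le_dist (by
    rw [Real.dist_eq, abs_sub_comm]; exact le_trans (by simp [b]; linarith) (le_abs_self _))
  have hz2 : ∀ t > 1 - d / 2, b t = 0 := fun t ht => b.zero_of_le_dist (by
    rw [Real.dist_eq]; exact le_trans (by simp [b]; linarith) (le_abs_self _))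
  have hone : ∀ t ∈ Icc d (1 - d), b t = 1 := fun t ht => b.one_of_mem_closedBall (by
    rw [Metric.mem_closedBall, Real.dist_eq, abs_le]; simp [b]
    constructor <;> linarith [ht.1, ht.2])
  have hBz : ∀ t < d / 2, ∫ s in (0 : ℝ)..t, b s = 0 := fun t ht => by
    rw [intervalIntegral.integral_congr (g := fun _ => (0 : ℝ))]
    · simp
    · intro s hs
      apply hz1
      have := hs.2
      exact lt_of_le_of_lt this (by simp; constructor <;> linarith)
  have hB1 : ∀ t > 1 - d / 2, ∫ s in (0 : ℝ)..t, b s = ∫ s in (0 : ℝ)..1, b s := fun t ht => by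
    rw [← intervalIntegral.integral_add_adjacent_intervals (b := 1)
      (hbc.intervalIntegrable _ _) (hbc.intervalIntegrable _ _)]
    rw [intervalIntegral.integral_congr (a := 1) (b := t) (g := fun _ => (0 : ℝ))]
    · simp
    · intro s hs
      apply hz2
      have := hs.1
      exact lt_of_lt_of_le (by simp; constructor <;> linarith) this
  have hmono : Monotone (fun t => ∫ s in (0 : ℝ)..t, b s) := by
    apply monotone_of_deriv_nonneg (fun t => (hD t).differentiableAt)
    intro t; rw [(hD t).deriv]; exact b.nonneg
  have hle1 : ∫ s in (0 : ℝ)..1, b s ≤ 1 := by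
    calc ∫ s in (0 : ℝ)..1, b s ≤ ∫ s in (0 : ℝ)..1, (1 : ℝ) :=
          intervalIntegral.integral_mono (by norm_num) (hbc.intervalIntegrable _ _)
            (by simp) (fun t => b.le_one)
      _ = 1 := by simp
  have hCex : ∃ C, ∀ t, ‖deriv b t‖ ≤ C :=
    (b.hasCompactSupport.deriv).exists_bound_of_continuous
      (hb.continuous_deriv (by simp))
  obtain ⟨C, hC⟩ := hCex
  refine ⟨b, fun t => ∫ s in (0 : ℝ)..t, b s, d / 2, C, by linarith, by linarith, hb, ?_, hD,
    fun t => b.nonneg, fun t => b.le_one, hz1, hz2, hBz, hB1, ?_, ?_, ?_, hC⟩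
  · rw [contDiff_infty_iff_deriv]
    refine ⟨fun t => (hD t).differentiableAt, ?_⟩
    have : deriv (fun t => ∫ s in (0 : ℝ)..t, b s) = b := funext fun t => (hD t).deriv
    rw [this]; exact hb
  · intro t
    by_cases h : t < d / 2
    · exact (hBz t h).ge
    · have := hmono (show (0:ℝ) ≤ t by linarith); simpa using this
  · intro t
    by_cases h : t > 1 - d / 2
    · simp only; rw [hB1 t h]; exact hle1
    · exact le_trans (hmono (show t ≤ 1 by linarith)) hle1
  · rw [← intervalIntegral.integral_of_le (by norm_num)]
    rw [intervalIntegral.integral_sub (by simp) (hbc.intervalIntegrable _ _)]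
    have h2 : ∫ s in d..(1 - d), (1 : ℝ) = ∫ s in d..(1 - d), b s := by
      apply intervalIntegral.integral_congr
      intro s hs
      rw [uIcc_of_le (by linarith)] at hs
      exact (hone s hs).symm
    have h3 : ∫ s in d..(1 - d), b s ≤ ∫ s in (0 : ℝ)..1, b s :=
      intervalIntegral.integral_mono_interval hd0.le (by linarith) (by linarith)
        (Eventually.of_forall fun t => b.nonneg) (hbc.intervalIntegrable _ _)
    simp at h2 ⊢
    linarith

lemma cont_fx {f : ℝ × ℝ → ℝ} (hf : ContDiff ℝ (⊤ : ℕ∞) f) : Continuous (fx f) :=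
  (hf.continuous_fderiv (by simp)).clm_apply continuous_const

lemma cont_fy {f : ℝ × ℝ → ℝ} (hf : ContDiff ℝ (⊤ : ℕ∞) f) : Continuous (fy f) :=
  (hf.continuous_fderiv (by simp)).clm_apply continuous_const

lemma cont_phi (K a b : ℝ) {f g : ℝ × ℝ → ℝ} (hf : ContDiff ℝ (⊤ : ℕ∞) f)
    (hg : ContDiff ℝ (⊤ : ℕ∞) g) : Continuous (phi K a b f g) := by
  have := cont_fx hf; have := cont_fx hg; have := cont_fy hf; have := cont_fy hg
  unfold phi; fun_prop

lemma int_bx {G : ℝ × ℝ → ℝ} (hG : Continuous G) (w h : ℝ) : IntegrableOn G (bx w h) := by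
  have : IntegrableOn G (Icc 0 w ×ˢ Icc 0 h) :=
    hG.continuousOn.integrableOn_compact (isCompact_Icc.prod isCompact_Icc)
  exact this.mono_set (prod_mono Ioc_subset_Icc_self Ioc_subset_Icc_self)

lemma meas_bx (w h : ℝ) : MeasurableSet (bx w h) := measurableSet_Ioc.prod measurableSet_Ioc

lemma const_bx (w h c : ℝ) (hw : 0 ≤ w) (hh : 0 ≤ h) : ∫ _ in bx w h, c = w * h * c := by
  rw [setIntegral_const]
  simp [bx, Measure.real, Measure.volume_eq_prod, Measure.prod_prod, hw, hh]

lemma tr_fx (f : ℝ × ℝ → ℝ) (c p : ℝ × ℝ) : fx (fun q => f (q - c)) p = fx f (p - c) := by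
  simp [fx, fderiv_comp_sub]

lemma tr_fy (f : ℝ × ℝ → ℝ) (c p : ℝ × ℝ) : fy (fun q => f (q - c)) p = fy f (p - c) := by
  simp [fy, fderiv_comp_sub]

lemma zero_fx {f : ℝ × ℝ → ℝ} {p : ℝ × ℝ} (h : ∀ᶠ q in 𝓝 p, f q = 0) : fx f p = 0 := by
  have : f =ᶠ[𝓝 p] fun _ => 0 := h
  simp [fx, this.fderiv_eq]

lemma zero_fy {f : ℝ × ℝ → ℝ} {p : ℝ × ℝ} (h : ∀ᶠ q in 𝓝 p, f q = 0) : fy f p = 0 := by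
  have : f =ᶠ[𝓝 p] fun _ => 0 := h
  simp [fy, this.fderiv_eq]

lemma add_fx {f g : ℝ × ℝ → ℝ} (hf : ContDiff ℝ (⊤ : ℕ∞) f) (hg : ContDiff ℝ (⊤ : ℕ∞) g)
    (p : ℝ × ℝ) : fx (fun q => f q + g q) p = fx f p + fx g p := by
  have h1 := (hf.differentiable (by simp)) p
  have h2 := (hg.differentiable (by simp)) p
  simp [fx, fderiv_fun_add h1 h2]

lemma add_fy {f g : ℝ × ℝ → ℝ} (hf : ContDiff ℝ (⊤ : ℕ∞) f) (hg : ContDiff ℝ (⊤ : ℕ∞) g)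
    (p : ℝ × ℝ) : fy (fun q => f q + g q) p = fy f p + fy g p := by
  have h1 := (hf.differentiable (by simp)) p
  have h2 := (hg.differentiable (by simp)) p
  simp [fy, fderiv_fun_add h1 h2]

lemma tr_ev {f : ℝ × ℝ → ℝ} {c p : ℝ × ℝ} (h : ∀ᶠ q in 𝓝 (p - c), f q = 0) :
    ∀ᶠ q in 𝓝 p, f (q - c) = 0 := by
  have : Tendsto (fun q : ℝ × ℝ => q - c) (𝓝 p) (𝓝 (p - c)) :=
    (continuous_id.sub continuous_const).continuousAt
  exact this.eventually h

lemma tr_cd {f : ℝ × ℝ → ℝ} (hf : ContDiff ℝ (⊤ : ℕ∞) f) (c : ℝ × ℝ) :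
    ContDiff ℝ (⊤ : ℕ∞) (fun q => f (q - c)) := hf.comp (contDiff_id.sub contDiff_const)

lemma tr_int (G : ℝ × ℝ → ℝ) (c : ℝ × ℝ) (s : Set (ℝ × ℝ)) :
    ∫ p in (fun q => q + c) ⁻¹' s, G (p + c) = ∫ p in s, G p :=
  (measurePreserving_add_right volume c).setIntegral_preimage_emb
    (measurableEmbedding_addRight c) G s

lemma split_x (G : ℝ × ℝ → ℝ) (hG : Continuous G) (w₁ w₂ h : ℝ) (h1 : 0 < w₁) (h2 : 0 < w₂) :
    ∫ p in bx (w₁ + w₂) h, G p = (∫ p in bx w₁ h, G p) + ∫ p in bx w₂ h, G (p + (w₁, 0)) := by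
  have e : bx (w₁ + w₂) h = bx w₁ h ∪ (Ioc w₁ (w₁ + w₂) ×ˢ Ioc 0 h) := by
    rw [bx, bx, ← union_prod, Ioc_union_Ioc_eq_Ioc h1.le (by linarith)]
  rw [e, setIntegral_union]
  · congr 1
    rw [← tr_int G (w₁, 0)]
    congr 2
    ext ⟨x, y⟩
    simp [bx, add_comm w₁ w₂]
  · rw [bx, Set.disjoint_prod]; left
    exact Ioc_disjoint_Ioc_of_le le_rfl
  · exact measurableSet_Ioc.prod measurableSet_Ioc
  · exact int_bx hG _ _
  · exact (int_bx hG (w₁ + w₂) h).mono_set (by rw [e]; exact subset_union_right)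

lemma split_y (G : ℝ × ℝ → ℝ) (hG : Continuous G) (w h₁ h₂ : ℝ) (h1 : 0 < h₁) (h2 : 0 < h₂) :
    ∫ p in bx w (h₁ + h₂), G p = (∫ p in bx w h₁, G p) + ∫ p in bx w h₂, G (p + (0, h₁)) := by
  have e : bx w (h₁ + h₂) = bx w h₁ ∪ (Ioc 0 w ×ˢ Ioc h₁ (h₁ + h₂)) := by
    rw [bx, bx, ← prod_union, Ioc_union_Ioc_eq_Ioc h1.le (by linarith)]
  rw [e, setIntegral_union]
  · congr 1
    rw [← tr_int G (0, h₁)]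
    congr 2
    ext ⟨x, y⟩
    simp [bx, add_comm h₁ h₂]
  · rw [bx, Set.disjoint_prod]; right
    exact Ioc_disjoint_Ioc_of_le le_rfl
  · exact measurableSet_Ioc.prod measurableSet_Ioc
  · exact int_bx hG _ _
  · exact (int_bx hG w (h₁ + h₂)).mono_set (by rw [e]; exact subset_union_right)

lemma concat_x {K a b w₁ w₂ h v₁ v₂ : ℝ} (h1 : 0 < w₁) (h2 : 0 < w₂)
    (H1 : P K a b w₁ h v₁) (H2 : P K a b w₂ h v₂) : P K a b (w₁ + w₂) h (v₁ + v₂) := by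
  obtain ⟨f₁, g₁, hf₁, hg₁, hv₁⟩ := H1
  obtain ⟨f₂, g₂, hf₂, hg₂, hv₂⟩ := H2
  have key : ∀ f g, Tst w₁ h f → Tst w₂ h g →
      Tst (w₁ + w₂) h (fun q => f q + g (q - (w₁, 0))) := by
    intro f g hf hg
    refine ⟨hf.1.add (tr_cd hg.1 _), fun p hp => ?_⟩
    have e1 := hf.2 p (by contrapose! hp; exact ⟨hp.1, by linarith, hp.2.2⟩)
    have e2 := tr_ev (hg.2 (p - (w₁, 0)) (by
      contrapose! hp; simp at hp; exact ⟨by linarith, by linarith, hp.2.2⟩))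
    filter_upwards [e1, e2] with q h1 h2
    simp [h1, h2]
  refine ⟨_, _, key f₁ f₂ hf₁ hf₂, key g₁ g₂ hg₁ hg₂, ?_⟩
  rw [split_x _ (cont_phi _ _ _ (key f₁ f₂ hf₁ hf₂).1 (key g₁ g₂ hg₁ hg₂).1) _ _ _ h1 h2]
  refine add_le_add (le_trans (le_of_eq ?_) hv₁) (le_trans (le_of_eq ?_) hv₂)
  · apply setIntegral_congr_fun (meas_bx _ _)
    intro p hp
    have hout : ¬ (0 < (p - (w₁, (0:ℝ))).1 ∧ (p - (w₁, (0:ℝ))).1 < w₂ ∧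
        0 < (p - (w₁, (0:ℝ))).2 ∧ (p - (w₁, (0:ℝ))).2 < h) := by
      intro hh; have := hp.1.2; simp at hh; linarith
    simp only [phi, add_fx hf₁.1 (tr_cd hf₂.1 _), add_fy hf₁.1 (tr_cd hf₂.1 _),
      add_fx hg₁.1 (tr_cd hg₂.1 _), add_fy hg₁.1 (tr_cd hg₂.1 _), tr_fx, tr_fy,
      zero_fx (hf₂.2 _ hout), zero_fy (hf₂.2 _ hout), zero_fx (hg₂.2 _ hout),
      zero_fy (hg₂.2 _ hout), add_zero]
  · apply setIntegral_congr_fun (meas_bx _ _)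
    intro p hp
    have hout : ¬ (0 < (p + (w₁, (0:ℝ))).1 ∧ (p + (w₁, (0:ℝ))).1 < w₁ ∧
        0 < (p + (w₁, (0:ℝ))).2 ∧ (p + (w₁, (0:ℝ))).2 < h) := by
      intro hh; have := hp.1.1; simp at hh; linarith
    simp only [phi, add_fx hf₁.1 (tr_cd hf₂.1 _), add_fy hf₁.1 (tr_cd hf₂.1 _),
      add_fx hg₁.1 (tr_cd hg₂.1 _), add_fy hg₁.1 (tr_cd hg₂.1 _), tr_fx, tr_fy,
      zero_fx (hf₁.2 _ hout), zero_fy (hf₁.2 _ hout), zero_fx (hg₁.2 _ hout),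
      zero_fy (hg₁.2 _ hout), zero_add, add_sub_cancel_right]

lemma concat_n {K a b w h v : ℝ} (hw : 0 < w) (H : P K a b w h v) (n : ℕ) :
    P K a b ((n + 1 : ℝ) * w) h ((n + 1 : ℝ) * v) := by
  induction n with
  | zero => simpa using H
  | succ n ih =>
    have := concat_x (by positivity) hw ih H
    push_cast
    convert this using 1 <;> ring

lemma swap_P {K a b w h v : ℝ} (H : P K a b w h v) : P K b a h w v := by
  obtain ⟨f, g, hf, hg, hv⟩ := H
  have key : ∀ f, Tst w h f → Tst h w (fun q => f q.swap) := by
    intro f hf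
    refine ⟨hf.1.comp (contDiff_snd.prodMk contDiff_fst), fun p hp => ?_⟩
    have : Tendsto Prod.swap (𝓝 p) (𝓝 p.swap) := continuous_swap.continuousAt
    exact this.eventually (hf.2 p.swap (by contrapose! hp; simp at hp ⊢; tauto))
  have hder : ∀ f, Tst w h f → ∀ p, fderiv ℝ (fun q : ℝ × ℝ => f q.swap) p =
      (fderiv ℝ f p.swap).comp
        ((ContinuousLinearMap.snd ℝ ℝ ℝ).prod (ContinuousLinearMap.fst ℝ ℝ ℝ)) := by
    intro f hf p
    have h1 : HasFDerivAt (fun q : ℝ × ℝ => q.swap)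
      ((ContinuousLinearMap.snd ℝ ℝ ℝ).prod (ContinuousLinearMap.fst ℝ ℝ ℝ)) p :=
      ((ContinuousLinearMap.snd ℝ ℝ ℝ).prod (ContinuousLinearMap.fst ℝ ℝ ℝ)).hasFDerivAt
    exact (((hf.1.differentiable (by simp)) p.swap).hasFDerivAt.comp p h1).fderiv
  have hsx : ∀ f, Tst w h f → ∀ p, fx (fun q : ℝ × ℝ => f q.swap) p = fy f p.swap := by
    intro f hf p; simp [fx, fy, hder f hf p]
  have hsy : ∀ f, Tst w h f → ∀ p, fy (fun q : ℝ × ℝ => f q.swap) p = fx f p.swap := by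
    intro f hf p; simp [fx, fy, hder f hf p]
  refine ⟨_, _, key g hg, key f hf, le_trans (le_of_eq ?_) hv⟩
  have h2 := setIntegral_prod_swap (μ := volume) (ν := volume) (Ioc (0:ℝ) w) (Ioc (0:ℝ) h)
    (phi K a b f g)
  rw [bx, bx, Measure.volume_eq_prod, ← h2]
  apply setIntegral_congr_fun (measurableSet_Ioc.prod measurableSet_Ioc)
  intro p _
  simp only [phi, hsx f hf, hsx g hg, hsy f hf, hsy g hg]
  rw [show b + fx g p.swap + (a + fy f p.swap) = a + fy f p.swap + (b + fx g p.swap) by ring]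
  ring

lemma scale_P {K a b w h v : ℝ} (H : P K a b w h v) : P K (2 * a) (2 * b) w h (2 * v) := by
  obtain ⟨f, g, hf, hg, hv⟩ := H
  have key : ∀ f, Tst w h f → Tst w h (fun q => f q + f q) := by
    intro f hf
    refine ⟨hf.1.add hf.1, fun p hp => ?_⟩
    filter_upwards [hf.2 p hp] with q hq
    simp [hq]
  refine ⟨_, _, key f hf, key g hg, ?_⟩
  have : ∀ p, phi K (2 * a) (2 * b) (fun q => f q + f q) (fun q => g q + g q) p =
      2 * phi K a b f g p := by
    intro p
    simp only [phi, add_fx hf.1 hf.1, add_fy hf.1 hf.1, add_fx hg.1 hg.1, add_fy hg.1 hg.1]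
    rw [show 2 * a + (fy f p + fy f p) + (2 * b + (fx g p + fx g p)) =
      2 * (a + fy f p + (b + fx g p)) by ring,
      show 2 * a + (fy f p + fy f p) = 2 * (a + fy f p) by ring,
      show 2 * b + (fx g p + fx g p) = 2 * (b + fx g p) by ring,
      ← two_mul, ← two_mul, abs_mul, abs_mul, abs_mul, abs_mul, abs_mul, abs_two]
    ring
  simp only [this]
  rw [integral_const_mul]
  linarith

lemma ptw (K X Y A Z x e : ℝ) (hK : 0 ≤ K) :
    K * (|X + x| + |Y| + |(A + e) + Z|) - |A + e| - |Z| ≤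
      K * (|X| + |Y| + |A + Z|) - |A| - |Z| + (K * |x| + (K + 1) * |e|) := by
  have h1 := abs_add_le X x
  have h2 : |(A + e) + Z| ≤ |A + Z| + |e| := by
    rw [show A + e + Z = (A + Z) + e by ring]; exact abs_add_le _ _
  have h3 : |A| ≤ |A + e| + |e| := by
    have := abs_sub (A + e) e; simpa using this
  nlinarith [mul_le_mul_of_nonneg_left h1 hK, mul_le_mul_of_nonneg_left h2 hK]

lemma int_scaled (b : ℝ → ℝ) (w : ℝ) (hw : 0 < w) :
    ∫ t in Ioc (0 : ℝ) w, (1 - b (t / w)) = w * ∫ t in Ioc (0 : ℝ) 1, (1 - b t) := by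
  rw [← intervalIntegral.integral_of_le hw.le, ← intervalIntegral.integral_of_le zero_le_one,
    intervalIntegral.integral_comp_div (fun t => 1 - b t) hw.ne']
  simp [hw.ne']

lemma int_err (b : ℝ → ℝ) (hb : Continuous b) (δ w h : ℝ) (hw : 0 < w) (hh : 0 < h)
    (hδ : ∫ t in Ioc (0 : ℝ) 1, (1 - b t) ≤ δ) :
    ∫ p in bx w h, ((1 - b (p.1 / w)) + (1 - b (p.2 / h))) ≤ 2 * δ * (w * h) := by
  rw [integral_add (int_bx (by fun_prop) _ _) (int_bx (by fun_prop) _ _)]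
  have e1 : ∫ p in bx w h, (1 - b (p.1 / w)) = (w * ∫ t in Ioc (0 : ℝ) 1, (1 - b t)) * h := by
    have := setIntegral_prod_mul (μ := volume) (ν := volume) (fun t => 1 - b (t / w))
      (fun _ => (1 : ℝ)) (Ioc 0 w) (Ioc 0 h)
    rw [int_scaled b w hw] at this
    simp [hh.le] at this
    rw [bx, Measure.volume_eq_prod, this]
  have e2 : ∫ p in bx w h, (1 - b (p.2 / h)) = w * (h * ∫ t in Ioc (0 : ℝ) 1, (1 - b t)) := by
    have := setIntegral_prod_mul (μ := volume) (ν := volume) (fun _ => (1 : ℝ))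
      (fun t => 1 - b (t / h)) (Ioc 0 w) (Ioc 0 h)
    rw [int_scaled b h hh] at this
    simp [hw.le] at this
    rw [bx, Measure.volume_eq_prod, this]
  rw [e1, e2]
  have : 0 < w * h := by positivity
  nlinarith

lemma int_err' (b : ℝ → ℝ) (hb : Continuous b) (δ w h c d : ℝ) (hw : 0 < w) (hh : 0 < h)
    (hd : 0 ≤ d)
    (hδ : ∫ t in Ioc (0 : ℝ) 1, (1 - b t) ≤ δ) :
    ∫ p in bx w h, (c + d * ((1 - b (p.1 / w)) + (1 - b (p.2 / h)))) ≤
      w * h * c + d * (2 * δ * (w * h)) := by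
  rw [integral_add (int_bx (by fun_prop) _ _) (int_bx (by fun_prop) _ _), integral_const_mul,
    const_bx _ _ _ hw.le hh.le]
  have := mul_le_mul_of_nonneg_left (int_err b hb δ w h hw hh hδ) hd
  linarith

lemma prod_der {u v : ℝ → ℝ} {u' v' : ℝ} {p : ℝ × ℝ} (hu : HasDerivAt u u' p.1)
    (hv : HasDerivAt v v' p.2) :
    fx (fun q => u q.1 * v q.2) p = u' * v p.2 ∧ fy (fun q => u q.1 * v q.2) p = u p.1 * v' := by
  have h1 : HasFDerivAt (fun q : ℝ × ℝ => u q.1) (u' • ContinuousLinearMap.fst ℝ ℝ ℝ) p :=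
    hu.comp_hasFDerivAt p hasFDerivAt_fst
  have h2 : HasFDerivAt (fun q : ℝ × ℝ => v q.2) (v' • ContinuousLinearMap.snd ℝ ℝ ℝ) p :=
    hv.comp_hasFDerivAt p hasFDerivAt_snd
  have h3 := (h1.mul h2).fderiv
  constructor
  · unfold fx
    erw [h3]; simp [mul_comm]
  · unfold fy
    erw [h3]; simp [mul_comm]

set_option maxHeartbeats 1600000 in
lemma lam (K a a' c b h₀ h δ : ℝ) (hK : 0 ≤ K) (hh₀ : 0 < h₀) (hh : 0 < h) (hδ : 0 < δ)
    (hc : (h₀ + h) * c = h₀ * a' + h * a) :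
    ∃ C, ∀ w v, 0 < w → P K a b w h v →
      P K c b w (h₀ + h) (v + w * h₀ * Fz K a' b + C + δ * w) := by
  obtain ⟨c₀, hc₀⟩ : ∃ c₀, c₀ = a' - c := ⟨_, rfl⟩
  obtain ⟨c₁, hc₁⟩ : ∃ c₁, c₁ = a - c := ⟨_, rfl⟩
  have hcc : c₀ * h₀ = - c₁ * h := by rw [hc₀, hc₁]; linarith
  obtain ⟨m, hm⟩ : ∃ m, m = 2 * (K + 1) * (|c₀| * h₀ + |c₁| * h) := ⟨_, rfl⟩
  have hm0 : 0 ≤ m := by rw [hm]; positivity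
  obtain ⟨β, B, e, D, he0, he1, hβ, hB, hBd, hβ0, hβ1, hz1, hz2, hBz, hBo, hB0, hB1, hIβ, hD⟩ :=
    bump_exists (δ / (m + 1)) (by positivity)
  have hD0 : 0 ≤ D := le_trans (abs_nonneg _) (hD 0)
  refine ⟨(h₀ + h) * (K * (D * (|c₀| * h₀))), fun w v hw H => ?_⟩
  obtain ⟨f, g, hf, hg, hv⟩ := H
  have hβc := hβ.continuous
  -- oscillating profile
  obtain ⟨G, hG⟩ : ∃ G : ℝ → ℝ, G = fun y => c₀ * h₀ * (B (y / h₀) - B ((y - h₀) / h)) := ⟨_, rfl⟩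
  have hGd : ∀ y, HasDerivAt G (c₀ * β (y / h₀) + c₁ * β ((y - h₀) / h)) y := by
    intro y
    have d1 : HasDerivAt (fun y => B (y / h₀)) (β (y / h₀) * (1 / h₀)) y :=
      (hBd (y / h₀)).comp y ((hasDerivAt_id y).div_const h₀)
    have d2 : HasDerivAt (fun y => B ((y - h₀) / h)) (β ((y - h₀) / h) * (1 / h)) y :=
      (hBd ((y - h₀) / h)).comp y (((hasDerivAt_id y).sub_const h₀).div_const h)
    have d3 := (d1.sub d2).const_mul (c₀ * h₀)
    rw [hG]
    have h5 : c₁ = - (c₀ * h₀) / h := by field_simp; linarith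
    have h6 : c₀ * β (y / h₀) + c₁ * β ((y - h₀) / h) =
        c₀ * h₀ * (β (y / h₀) * (1 / h₀) - β ((y - h₀) / h) * (1 / h)) := by
      rw [h5]; field_simp; ring
    rw [h6]
    exact d3
  have hGs : ContDiff ℝ (⊤ : ℕ∞) G := by
    rw [hG]
    exact contDiff_const.mul ((hB.comp (contDiff_id.div_const _)).sub
      (hB.comp ((contDiff_id.sub contDiff_const).div_const _)))
  have hGb : ∀ y, |G y| ≤ |c₀| * h₀ := by
    intro y
    rw [hG]
    simp only [abs_mul, abs_of_pos hh₀]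
    have : |B (y / h₀) - B ((y - h₀) / h)| ≤ 1 := by
      rw [abs_le]
      constructor <;> linarith [hB0 (y / h₀), hB1 (y / h₀), hB0 ((y - h₀) / h), hB1 ((y - h₀) / h)]
    have h0 : 0 ≤ |c₀| * h₀ := by positivity
    nlinarith
  have hXd : ∀ x, HasDerivAt (fun x => β (x / w)) (deriv β (x / w) * (1 / w)) x := fun x =>
    ((hβ.differentiable (by simp) (x / w)).hasDerivAt).comp x ((hasDerivAt_id x).div_const w)
  have hψ : Tst w (h₀ + h) (fun q => β (q.1 / w) * G q.2) := by
    refine ⟨((hβ.comp (contDiff_fst.div_const _))).mul (hGs.comp contDiff_snd), fun p hp => ?_⟩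
    have cz : ∀ (r : ℝ × ℝ → ℝ) (_ : Continuous r) (k : ℝ), r p < k → ∀ᶠ q in 𝓝 p, r q < k :=
      fun r hr k hk => hr.continuousAt.eventually_lt continuousAt_const hk
    have cz' : ∀ (r : ℝ × ℝ → ℝ) (_ : Continuous r) (k : ℝ), k < r p → ∀ᶠ q in 𝓝 p, k < r q :=
      fun r hr k hk => continuousAt_const.eventually_lt hr.continuousAt hk
    by_cases q1 : 0 < p.1
    swap
    · filter_upwards [cz (fun q => q.1 / w) (by fun_prop) e
        (lt_of_le_of_lt (div_nonpos_of_nonpos_of_nonneg (not_lt.1 q1) hw.le) he0)] with q hq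
      simp [hz1 _ hq]
    by_cases q2 : p.1 < w
    swap
    · filter_upwards [cz' (fun q => q.1 / w) (by fun_prop) (1 - e)
        (lt_of_lt_of_le (by linarith) ((one_le_div hw).2 (not_lt.1 q2)))] with q hq
      simp [hz2 _ hq]
    by_cases q3 : 0 < p.2
    swap
    · filter_upwards [cz (fun q => q.2 / h₀) (by fun_prop) e
        (lt_of_le_of_lt (div_nonpos_of_nonpos_of_nonneg (not_lt.1 q3) hh₀.le) he0),
        cz (fun q => (q.2 - h₀) / h) (by fun_prop) e
        (lt_of_le_of_lt (div_nonpos_of_nonpos_of_nonneg (by linarith) hh.le) he0)] with q hq hq'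
      simp [hG, hBz _ hq, hBz _ hq']
    have q4 : h₀ + h ≤ p.2 := by
      by_contra hcon
      exact hp ⟨q1, q2, q3, not_le.1 hcon⟩
    filter_upwards [cz' (fun q => q.2 / h₀) (by fun_prop) (1 - e)
        (lt_of_lt_of_le (by linarith) ((one_le_div hh₀).2 (by linarith))),
        cz' (fun q => (q.2 - h₀) / h) (by fun_prop) (1 - e)
        (lt_of_lt_of_le (by linarith) ((one_le_div hh).2 (by linarith)))] with q hq hq'
    simp [hG, hBo _ hq, hBo _ hq']
  have key : ∀ f, Tst w h f → Tst w (h₀ + h) (fun q => f (q - (0, h₀))) := by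
    intro f hf
    refine ⟨tr_cd hf.1 _, fun p hp => tr_ev (hf.2 (p - (0, h₀)) ?_)⟩
    contrapose! hp; simp at hp; exact ⟨by linarith, by linarith, by linarith, by linarith⟩
  have hf2 : Tst w (h₀ + h) (fun q => f (q - (0, h₀)) + β (q.1 / w) * G q.2) := by
    refine ⟨(key f hf).1.add hψ.1, fun p hp => ?_⟩
    filter_upwards [(key f hf).2 p hp, hψ.2 p hp] with q h1 h2
    rw [h1, h2, add_zero]
  have dfx : ∀ p, fx (fun q => f (q - (0, h₀)) + β (q.1 / w) * G q.2) p =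
      fx f (p - (0, h₀)) + deriv β (p.1 / w) * (1 / w) * G p.2 := by
    intro p
    rw [add_fx (key f hf).1 hψ.1, tr_fx, (prod_der (hXd p.1) (hGd p.2)).1]
  have dfy : ∀ p, fy (fun q => f (q - (0, h₀)) + β (q.1 / w) * G q.2) p =
      fy f (p - (0, h₀)) +
        β (p.1 / w) * (c₀ * β (p.2 / h₀) + c₁ * β ((p.2 - h₀) / h)) := by
    intro p
    rw [add_fy (key f hf).1 hψ.1, tr_fy, (prod_der (hXd p.1) (hGd p.2)).2]
  have ebd : ∀ x y, |deriv β x * (1 / w) * G y| ≤ D * (|c₀| * h₀) / w := by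
    intro x y
    rw [abs_mul, abs_mul, abs_of_pos (show 0 < 1 / w by positivity)]
    calc |deriv β x| * (1 / w) * |G y| ≤ D * (1 / w) * (|c₀| * h₀) := by
          gcongr
          · exact hD x
          · exact hGb y
      _ = _ := by ring
  have bb : ∀ s t, 0 ≤ 1 - β s * β t ∧ 1 - β s * β t ≤ (1 - β s) + (1 - β t) := by
    intro s t
    have := hβ0 s; have := hβ0 t; have := hβ1 s; have := hβ1 t
    constructor <;> nlinarith
  refine ⟨_, _, hf2, key g hg, ?_⟩
  have hcont := cont_phi K c b hf2.1 (key g hg).1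
  rw [split_y _ hcont _ _ _ hh₀ hh]
  obtain ⟨E, hE⟩ : ∃ E, E = K * (D * (|c₀| * h₀) / w) := ⟨_, rfl⟩
  have low : ∫ p in bx w h₀, phi K c b (fun q => f (q - (0, h₀)) + β (q.1 / w) * G q.2)
      (fun q => g (q - (0, h₀))) p ≤ w * h₀ * (Fz K a' b + E) +
        (K + 1) * |c₀| * (2 * (δ / (m + 1)) * (w * h₀)) := by
    refine le_trans ?_ (int_err' β hβc (δ / (m + 1)) w h₀ (Fz K a' b + E) ((K + 1) * |c₀|) hw hh₀
      (by positivity) hIβ)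
    apply setIntegral_mono_on (int_bx hcont _ _) (int_bx (by fun_prop) _ _) (meas_bx _ _)
    intro p hp
    have hout : ¬ (0 < (p - ((0:ℝ), h₀)).1 ∧ (p - ((0:ℝ), h₀)).1 < w ∧
        0 < (p - ((0:ℝ), h₀)).2 ∧ (p - ((0:ℝ), h₀)).2 < h) := by
      intro hh; have := hp.2.2; simp at hh; linarith
    have hb0 : β ((p.2 - h₀) / h) = 0 := hz1 _ (lt_of_le_of_lt
      (div_nonpos_of_nonpos_of_nonneg (by linarith [hp.2.2]) hh.le) he0)
    have hp' := ptw K 0 0 a' b (deriv β (p.1 / w) * (1 / w) * G p.2)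
      (-(c₀ * (1 - β (p.1 / w) * β (p.2 / h₀)))) hK
    simp only [phi, dfx, dfy, tr_fx, tr_fy, zero_fx (hf.2 _ hout), zero_fy (hf.2 _ hout),
      zero_fx (hg.2 _ hout), zero_fy (hg.2 _ hout), hb0]
    rw [show c + (0 + β (p.1 / w) * (c₀ * β (p.2 / h₀) + c₁ * 0)) =
      a' + -(c₀ * (1 - β (p.1 / w) * β (p.2 / h₀))) by rw [hc₀]; ring, add_zero b]
    refine le_trans hp' ?_
    rw [abs_neg, abs_mul c₀, abs_of_nonneg (bb _ _).1]
    have t1 := mul_le_mul_of_nonneg_left (ebd (p.1 / w) p.2) hK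
    have t2 := mul_le_mul_of_nonneg_left (bb (p.1 / w) (p.2 / h₀)).2
      (show 0 ≤ (K + 1) * |c₀| by positivity)
    simp only [abs_zero, zero_add, Fz, hE]
    linarith
  have upp : ∫ p in bx w h, phi K c b (fun q => f (q - (0, h₀)) + β (q.1 / w) * G q.2)
      (fun q => g (q - (0, h₀))) (p + (0, h₀)) ≤ v + (w * h * E +
        (K + 1) * |c₁| * (2 * (δ / (m + 1)) * (w * h))) := by
    have hi := int_err' β hβc (δ / (m + 1)) w h E ((K + 1) * |c₁|) hw hh (by positivity) hIβ
    refine le_trans ?_ (add_le_add hv hi)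
    have hphi := cont_phi K a b hf.1 hg.1
    rw [← integral_add (int_bx hphi _ _) (int_bx (by fun_prop) _ _)]
    have hshift : Continuous fun p : ℝ × ℝ => phi K c b
        (fun q => f (q - (0, h₀)) + β (q.1 / w) * G q.2) (fun q => g (q - (0, h₀)))
        (p + (0, h₀)) := hcont.comp (continuous_id.add continuous_const)
    apply setIntegral_mono_on (int_bx hshift _ _)
      (int_bx (by fun_prop) _ _) (meas_bx _ _)
    intro p hp
    have hb0 : β ((p.2 + h₀) / h₀) = 0 := hz2 _ (lt_of_lt_of_le (by linarith)
      ((one_le_div hh₀).2 (by linarith [hp.2.1])))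
    have hp' := ptw K (fx f p) (fy g p) (a + fy f p) (b + fx g p)
      (deriv β (p.1 / w) * (1 / w) * G (p.2 + h₀))
      (-(c₁ * (1 - β (p.1 / w) * β (p.2 / h)))) hK
    simp only [phi, dfx, dfy, tr_fx, tr_fy, add_sub_cancel_right, Prod.fst_add, Prod.snd_add,
      add_zero, hb0]
    rw [show c + (fy f p + β (p.1 / w) * (c₀ * 0 + c₁ * β (p.2 / h))) =
      a + fy f p + -(c₁ * (1 - β (p.1 / w) * β (p.2 / h))) by rw [hc₁]; ring]
    refine le_trans hp' ?_
    rw [abs_neg, abs_mul c₁, abs_of_nonneg (bb _ _).1]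
    have t1 := mul_le_mul_of_nonneg_left (ebd (p.1 / w) (p.2 + h₀)) hK
    have t2 := mul_le_mul_of_nonneg_left (bb (p.1 / w) (p.2 / h)).2
      (show 0 ≤ (K + 1) * |c₁| by positivity)
    rw [hE]
    linarith
  refine le_trans (add_le_add low upp) ?_
  have hw1 : w * E = K * (D * (|c₀| * h₀)) := by rw [hE]; field_simp
  have hw2 : δ / (m + 1) * m ≤ δ := by
    rw [div_mul_eq_mul_div, div_le_iff₀ (by positivity)]; nlinarith
  have hw3 := mul_le_mul_of_nonneg_right hw2 hw.le
  rw [hm] at hw3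
  rw [← hw1]
  rw [hm]
  linarith

/-- Admissible averaged energies. -/
def Adm (K a b q : ℝ) : Prop := ∃ w h, 0 < w ∧ 0 < h ∧ P K a b w h (q * (w * h))

lemma P_mono {K a b w h v v' : ℝ} (hv : v ≤ v') (H : P K a b w h v) : P K a b w h v' := by
  obtain ⟨f, g, hf, hg, h⟩ := H
  exact ⟨f, g, hf, hg, h.trans hv⟩

lemma adm_swap {K a b q : ℝ} (H : Adm K a b q) : Adm K b a q := by
  obtain ⟨w, h, hw, hh, H⟩ := H
  refine ⟨h, w, hh, hw, ?_⟩
  rw [mul_comm h w]; exact swap_P H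

lemma adm_scale {K a b q : ℝ} (H : Adm K a b q) : Adm K (2 * a) (2 * b) (2 * q) := by
  obtain ⟨w, h, hw, hh, H⟩ := H
  refine ⟨w, h, hw, hh, ?_⟩
  rw [mul_assoc]; exact scale_P H

lemma adm_step {K a b q : ℝ} (a' c μ ε r : ℝ) (hK : 0 ≤ K) (hμ : 0 < μ) (hε : 0 < ε)
    (hc : (1 + μ) * c = μ * a' + a) (hr : q + μ * Fz K a' b + ε ≤ (1 + μ) * r)
    (H : Adm K a b q) : Adm K c b r := by
  obtain ⟨w, h, hw, hh, H⟩ := H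
  obtain ⟨C, hC⟩ := lam K a a' c b (μ * h) h (ε * h / 2) hK (by positivity) hh (by positivity)
    (by linear_combination h * hc)
  obtain ⟨n, hn⟩ := exists_nat_ge (C / (ε * h * w / 2))
  have hn' : C ≤ (n + 1 : ℝ) * (ε * h * w / 2) := by
    rw [div_le_iff₀ (by positivity)] at hn
    have : 0 < ε * h * w / 2 := by positivity
    linarith
  refine ⟨(n + 1 : ℝ) * w, μ * h + h, by positivity, by positivity, ?_⟩
  refine P_mono ?_ (hC _ _ (by positivity) (concat_n hw H n))
  have hp : 0 < (n + 1 : ℝ) * w * h := by positivity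
  have := mul_le_mul_of_nonneg_left hr hp.le
  linarith

lemma adm_base (K : ℝ) : Adm K 1 1 (K * 2 - 2) := by
  refine ⟨1, 1, one_pos, one_pos, fun _ => 0, fun _ => 0, ⟨contDiff_const, fun _ _ => by simp⟩,
    ⟨contDiff_const, fun _ _ => by simp⟩, le_of_eq ?_⟩
  have : ∀ p, phi K 1 1 (fun _ => 0) (fun _ => 0) p = K * 2 - 2 := by
    intro p; simp [phi, fx, fy]; norm_num; ring
  simp only [this]
  rw [const_bx _ _ _ zero_le_one zero_le_one]; ring

lemma adm_down {K q : ℝ} (hK : 0 ≤ K) (H : Adm K 1 1 q) : Adm K 1 1 (q - 1) := by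
  have h1 := adm_swap (adm_scale H)
  have h2 : Adm K 1 2 (3 / 2 * q - 3 / 4) := by
    have := adm_step (-2) 1 (1 / 3) (1 / 3) (3 / 2 * q - 3 / 4) hK (by norm_num) (by norm_num)
      (by norm_num) (by simp [Fz]; linarith) h1
    simpa using this
  exact adm_step (-1) 1 (1 / 2) (1 / 4) (q - 1) hK (by norm_num) (by norm_num)
      (by norm_num) (by simp [Fz]; linarith) (adm_swap h2)

lemma adm_all {K : ℝ} (hK : 0 ≤ K) (n : ℕ) : Adm K 1 1 (K * 2 - 2 - n) := by
  induction n with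
  | zero => simpa using adm_base K
  | succ n ih =>
    have := adm_down hK ih
    push_cast; convert this using 1; ring

lemma contra {K : ℝ} (hK : 0 ≤ K)
    (H : ∀ w h f g, 0 < w → 0 < h → Tst w h f → Tst w h g →
      0 ≤ ∫ p in bx w h, phi K 0 0 f g p) : False := by
  obtain ⟨n, hn⟩ := exists_nat_gt (4 * K)
  obtain ⟨w, h, hw, hh, f, g, hf, hg, hv⟩ := adm_all hK n
  have h0 := H w h f g hw hh hf hg
  have h1 : ∫ p in bx w h, (phi K 0 0 f g p + (-(2 * K + 2))) ≤ ∫ p in bx w h, phi K 1 1 f g p := by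
    have c0 := cont_phi K 0 0 hf.1 hg.1
    apply setIntegral_mono_on (int_bx (by fun_prop) _ _) (int_bx (cont_phi K 1 1 hf.1 hg.1) _ _)
      (meas_bx _ _)
    intro p _
    simp only [phi, zero_add]
    have e1 : |fy f p + fx g p| ≤ |1 + fy f p + (1 + fx g p)| + 2 := by
      have := abs_sub (1 + fy f p + (1 + fx g p)) 2
      rw [abs_two] at this
      rwa [show 1 + fy f p + (1 + fx g p) - 2 = fy f p + fx g p by ring] at this
    have e2 := abs_add_le 1 (fy f p)
    have e3 := abs_add_le 1 (fx g p)
    rw [abs_one] at e2 e3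
    nlinarith [mul_le_mul_of_nonneg_left e1 hK]
  rw [integral_add (int_bx (cont_phi K 0 0 hf.1 hg.1) _ _) (int_bx (by fun_prop) _ _),
    const_bx _ _ _ hw.le hh.le] at h1
  have hp : 0 < w * h := by positivity
  nlinarith


open Matrix in
/-- Jacobian entries are bounded by Frobenius norm. -/
lemma entry_le (M : Matrix (Fin 2) (Fin 2) ℝ) (i j : Fin 2) : |M i j| ≤ frobNorm M := by
  rw [frobNorm, ← Real.sqrt_sq_eq_abs]
  apply Real.sqrt_le_sqrt
  fin_cases i <;> fin_cases j <;> simp [Fin.sum_univ_two] <;>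
    nlinarith [sq_nonneg (M 0 0), sq_nonneg (M 0 1), sq_nonneg (M 1 0), sq_nonneg (M 1 1)]

open Matrix in
lemma sym_le (M : Matrix (Fin 2) (Fin 2) ℝ) :
    frobNorm ((1 / 2 : ℝ) • (M + Mᵀ)) ≤ |M 0 0| + |M 1 1| + |M 0 1 + M 1 0| := by
  rw [frobNorm]
  apply Real.sqrt_le_iff.2
  refine ⟨by positivity, ?_⟩
  simp [Fin.sum_univ_two]
  have a1 := abs_nonneg (M 0 0)
  have a2 := abs_nonneg (M 1 1)
  have a3 := abs_nonneg (M 0 1 + M 1 0)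
  have b1 := sq_abs (M 0 0)
  have b2 := sq_abs (M 1 1)
  have b3 := sq_abs (M 0 1 + M 1 0)
  nlinarith [mul_nonneg a1 a2, mul_nonneg a1 a3, mul_nonneg a2 a3]

abbrev E2 := EuclideanSpace ℝ (Fin 2)

lemma half_le (m : E2 → ℝ) (hm : Continuous m)
    (h0 : ∫ x in Metric.ball (0 : E2) 1, m x = 0) (α : ℝ) :
    1 / 2 * ∫ x in Metric.ball (0 : E2) 1, |m x| ≤ ∫ x in Metric.ball (0 : E2) 1, |m x - α| := by
  have hi : ∀ r : E2 → ℝ, Continuous r → IntegrableOn r (Metric.ball (0 : E2) 1) := fun r hr =>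
    (hr.continuousOn.integrableOn_compact (isCompact_closedBall 0 1)).mono_set
      Metric.ball_subset_closedBall
  have e1 : ∫ x in Metric.ball (0 : E2) 1, |m x| ≤
      ∫ x in Metric.ball (0 : E2) 1, (|m x - α| + |α|) := by
    apply integral_mono (hi _ (by fun_prop)) (hi _ (by fun_prop))
    intro x
    have := abs_add_le (m x - α) α
    simpa using this
  have e2 : |∫ x in Metric.ball (0 : E2) 1, (m x - α)| ≤
      ∫ x in Metric.ball (0 : E2) 1, |m x - α| := abs_integral_le_integral_abs
  rw [integral_add (hi _ (by fun_prop)) (hi _ (by fun_prop))] at e1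
  rw [integral_sub (hi _ (by fun_prop)) (hi _ (by fun_prop)), h0, zero_sub, abs_neg] at e2
  simp only [setIntegral_const, smul_eq_mul, abs_mul] at e1 e2
  rw [abs_of_nonneg (measureReal_nonneg)] at e2
  linarith

lemma int_fderiv_zero (F : E2 → ℝ) (hF : ContDiff ℝ (⊤ : ℕ∞) F) (hc : HasCompactSupport F)
    (v : E2) : ∫ x, fderiv ℝ F x v = 0 := by
  have hcont : Continuous fun x => fderiv ℝ F x v :=
    (hF.continuous_fderiv (by simp)).clm_apply continuous_const
  have h := integral_mul_fderiv_eq_neg_fderiv_mul_of_integrable (μ := (volume : Measure E2))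
    (f := fun _ : E2 => (1 : ℝ)) (g := F) (v := v) (by simp)
    (by simpa using hcont.integrable_of_hasCompactSupport (hc.fderiv_apply ℝ v))
    (by simpa using hF.continuous.integrable_of_hasCompactSupport hc)
    (by intros; fun_prop) (by intro x _; exact hF.differentiable (by simp) x)
  simpa using h

noncomputable def T (R : ℝ) : E2 →L[ℝ] ℝ × ℝ :=
  R • ((EuclideanSpace.proj 0 : E2 →L[ℝ] ℝ).prod (EuclideanSpace.proj 1))

lemma int_T (R : ℝ) (hR : 0 < R) (G : ℝ × ℝ → ℝ) :
    ∫ x, G (T R x) = (R ^ 2)⁻¹ * ∫ p, G p := by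
  have h1 := (volume_preserving_finTwoArrow ℝ).comp (PiLp.volume_preserving_ofLp (Fin 2))
  have hemb : MeasurableEmbedding
      (MeasurableEquiv.finTwoArrow ∘ (@WithLp.ofLp 2 (Fin 2 → ℝ)) : E2 → ℝ × ℝ) :=
    (MeasurableEquiv.finTwoArrow).measurableEmbedding.comp
      (MeasurableEquiv.toLp 2 (Fin 2 → ℝ)).symm.measurableEmbedding
  rw [← h1.integral_comp hemb G]
  have h2 := Measure.integral_comp_smul (volume : Measure E2)
    (fun x => G ((MeasurableEquiv.finTwoArrow ∘ (@WithLp.ofLp 2 (Fin 2 → ℝ))) x)) R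
  simp only [finrank_euclideanSpace, Fintype.card_fin, smul_eq_mul] at h2
  rw [abs_of_pos (by positivity)] at h2
  rw [← h2]
  rfl

lemma link (C : ℝ) (hC : 0 < C)
    (H : ∀ u : EuclideanSpace ℝ (Fin 2) → EuclideanSpace ℝ (Fin 2),
        ContDiff ℝ (⊤ : ℕ∞) u → HasCompactSupport u →
        tsupport u ⊆ Metric.ball (0 : EuclideanSpace ℝ (Fin 2)) 1 →
        sInf {r : ℝ | ∃ A : Matrix (Fin 2) (Fin 2) ℝ, A.transpose = -A ∧
            r = ∫ x in Metric.ball (0 : EuclideanSpace ℝ (Fin 2)) 1,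
              frobNorm (jacobian u x - A)} ≤
          C * ∫ x in Metric.ball (0 : EuclideanSpace ℝ (Fin 2)) 1,
            frobNorm ((1 / 2 : ℝ) • (jacobian u x + (jacobian u x).transpose)))
    (w h : ℝ) (f g : ℝ × ℝ → ℝ) (hw : 0 < w) (hh : 0 < h) (hf : Tst w h f) (hg : Tst w h g) :
    0 ≤ ∫ p in bx w h, phi (4 * C) 0 0 f g p := by
  obtain ⟨R, hR⟩ : ∃ R, R = w + h + 1 := ⟨_, rfl⟩
  have hR0 : 0 < R := by rw [hR]; positivity
  have hi : ∀ r : E2 → ℝ, Continuous r → IntegrableOn r (Metric.ball (0 : E2) 1) := fun r hr =>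
    (hr.continuousOn.integrableOn_compact (isCompact_closedBall 0 1)).mono_set
      Metric.ball_subset_closedBall
  have hout : ∀ x : E2, x ∉ Metric.ball (0 : E2) 1 →
      ¬ (0 < (T R x).1 ∧ (T R x).1 < w ∧ 0 < (T R x).2 ∧ (T R x).2 < h) := by
    rintro x hx ⟨h1, h2, h3, h4⟩
    apply hx
    change 0 < R * x 0 at h1
    change R * x 0 < w at h2
    change 0 < R * x 1 at h3
    change R * x 1 < h at h4
    rw [mem_ball_zero_iff, EuclideanSpace.norm_eq, Real.sqrt_lt' one_pos]
    simp only [Fin.sum_univ_two, Real.norm_eq_abs, sq_abs]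
    have p1 : 0 < x 0 := pos_of_mul_pos_right h1 hR0.le
    have p2 : 0 < x 1 := pos_of_mul_pos_right h3 hR0.le
    have p3 : x 0 + x 1 < 1 := by
      by_contra hcon
      nlinarith
    nlinarith
  have hev : ∀ f, Tst w h f → ∀ x : E2, x ∉ Metric.ball (0 : E2) 1 →
      ∀ᶠ y in 𝓝 x, f (T R y) = 0 := by
    intro f hf x hx
    exact ((T R).continuous.tendsto x).eventually (hf.2 _ (hout x hx))
  have hts : ∀ f, Tst w h f → HasCompactSupport (fun x => f (T R x)) := by
    intro f hf
    apply HasCompactSupport.intro (isCompact_closedBall (0 : E2) 1)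
    intro x hx
    exact (hev f hf x (fun h => hx (Metric.ball_subset_closedBall h))).self_of_nhds
  have hcd : ∀ f, Tst w h f → ContDiff ℝ (⊤ : ℕ∞) (fun x => f (T R x)) :=
    fun f hf => hf.1.comp (T R).contDiff
  obtain ⟨u, hu⟩ : ∃ u : E2 → E2, u = fun x => !₂[f (T R x), g (T R x)] := ⟨_, rfl⟩
  have hucd : ContDiff ℝ (⊤ : ℕ∞) u := by
    rw [hu, contDiff_euclidean]
    intro i
    fin_cases i
    · exact hcd f hf
    · exact hcd g hg
  have huev : ∀ x : E2, x ∉ Metric.ball (0 : E2) 1 → ∀ᶠ y in 𝓝 x, u y = 0 := by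
    intro x hx
    filter_upwards [hev f hf x hx, hev g hg x hx] with y h1 h2
    rw [hu]; ext i; fin_cases i <;> simp [h1, h2]
  have hus : tsupport u ⊆ Metric.ball (0 : E2) 1 := by
    intro x hx
    by_contra hcon
    exact (notMem_tsupport_iff_eventuallyEq.2 (huev x hcon)) hx
  have huc : HasCompactSupport u := by
    apply HasCompactSupport.intro (isCompact_closedBall (0 : E2) 1)
    intro x hx
    exact (huev x (fun h => hx (Metric.ball_subset_closedBall h))).self_of_nhds
  have hjac : ∀ x i j, jacobian u x i j =
      fderiv ℝ (fun y => u y i) x (EuclideanSpace.single j 1) := by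
    intro x i j
    have h1 := (hucd.differentiable (by simp) x).hasFDerivAt
    have h2 := (EuclideanSpace.proj i : E2 →L[ℝ] ℝ).hasFDerivAt.comp x h1
    have h3 : fderiv ℝ (fun y => u y i) x =
      (EuclideanSpace.proj i : E2 →L[ℝ] ℝ).comp (fderiv ℝ u x) := h2.fderiv
    rw [h3]; rfl
  have hT0 : T R (EuclideanSpace.single 0 1) = R • ((1 : ℝ), (0 : ℝ)) := by
    simp [T]
  have hT1 : T R (EuclideanSpace.single 1 1) = R • ((0 : ℝ), (1 : ℝ)) := by
    simp [T]
  have hch : ∀ f, Tst w h f → ∀ x v, fderiv ℝ (fun y => f (T R y)) x v =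
      fderiv ℝ f (T R x) (T R v) := by
    intro f hf x v
    have h1 := ((hf.1.differentiable (by simp)) (T R x)).hasFDerivAt.comp x (T R).hasFDerivAt
    have h2 : fderiv ℝ (fun y => f (T R y)) x = _ := h1.fderiv
    rw [h2]; rfl
  have u0 : (fun y => u y 0) = fun y => f (T R y) := by rw [hu]; rfl
  have u1 : (fun y => u y 1) = fun y => g (T R y) := by rw [hu]; rfl
  have j00 : ∀ x, jacobian u x 0 0 = R * fx f (T R x) := fun x => by
    rw [hjac, u0, hch f hf, hT0, _root_.map_smul]; rfl
  have j01 : ∀ x, jacobian u x 0 1 = R * fy f (T R x) := fun x => by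
    rw [hjac, u0, hch f hf, hT1, _root_.map_smul]; rfl
  have j10 : ∀ x, jacobian u x 1 0 = R * fx g (T R x) := fun x => by
    rw [hjac, u1, hch g hg, hT0, _root_.map_smul]; rfl
  have j11 : ∀ x, jacobian u x 1 1 = R * fy g (T R x) := fun x => by
    rw [hjac, u1, hch g hg, hT1, _root_.map_smul]; rfl
  have c00 : Continuous fun x => jacobian u x 0 0 := by
    simp only [j00]; exact continuous_const.mul ((cont_fx hf.1).comp (T R).continuous)
  have c01 : Continuous fun x => jacobian u x 0 1 := by
    simp only [j01]; exact continuous_const.mul ((cont_fy hf.1).comp (T R).continuous)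
  have c10 : Continuous fun x => jacobian u x 1 0 := by
    simp only [j10]; exact continuous_const.mul ((cont_fx hg.1).comp (T R).continuous)
  have c11 : Continuous fun x => jacobian u x 1 1 := by
    simp only [j11]; exact continuous_const.mul ((cont_fy hg.1).comp (T R).continuous)
  have z01 : ∫ x in Metric.ball (0 : E2) 1, jacobian u x 0 1 = 0 := by
    rw [setIntegral_eq_integral_of_forall_compl_eq_zero
      (fun x hx => by rw [j01, zero_fy (hf.2 _ (hout x hx)), mul_zero])]
    simp only [hjac, u0]
    exact int_fderiv_zero _ (hcd f hf) (hts f hf) _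
  have z10 : ∫ x in Metric.ball (0 : E2) 1, jacobian u x 1 0 = 0 := by
    rw [setIntegral_eq_integral_of_forall_compl_eq_zero
      (fun x hx => by rw [j10, zero_fx (hg.2 _ (hout x hx)), mul_zero])]
    simp only [hjac, u1]
    exact int_fderiv_zero _ (hcd g hg) (hts g hg) _
  have cfr : ∀ A : Matrix (Fin 2) (Fin 2) ℝ, Continuous fun x => frobNorm (jacobian u x - A) := by
    intro A
    simp only [frobNorm, Fin.sum_univ_two, Matrix.sub_apply]
    fun_prop
  have cfs : Continuous fun x =>
      frobNorm ((1 / 2 : ℝ) • (jacobian u x + (jacobian u x).transpose)) := by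
    simp only [frobNorm, Fin.sum_univ_two, Matrix.smul_apply, Matrix.add_apply,
      Matrix.transpose_apply, smul_eq_mul]
    fun_prop
  have hmain := H u hucd huc hus
  have hlow : 1 / 4 * ((∫ x in Metric.ball (0 : E2) 1, |jacobian u x 0 1|) +
      ∫ x in Metric.ball (0 : E2) 1, |jacobian u x 1 0|) ≤
      sInf {r : ℝ | ∃ A : Matrix (Fin 2) (Fin 2) ℝ, A.transpose = -A ∧
            r = ∫ x in Metric.ball (0 : EuclideanSpace ℝ (Fin 2)) 1,
              frobNorm (jacobian u x - A)} := by
    apply le_csInf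
    · exact ⟨_, 0, by simp, rfl⟩
    · rintro r ⟨A, -, rfl⟩
      have a1 := half_le _ c01 z01 (A 0 1)
      have a2 := half_le _ c10 z10 (A 1 0)
      have b1 : ∫ x in Metric.ball (0 : E2) 1, |jacobian u x 0 1 - A 0 1| ≤
          ∫ x in Metric.ball (0 : E2) 1, frobNorm (jacobian u x - A) :=
        integral_mono (hi _ (by fun_prop)) (hi _ (cfr A)) (fun x => entry_le (jacobian u x - A) 0 1)
      have b2 : ∫ x in Metric.ball (0 : E2) 1, |jacobian u x 1 0 - A 1 0| ≤
          ∫ x in Metric.ball (0 : E2) 1, frobNorm (jacobian u x - A) :=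
        integral_mono (hi _ (by fun_prop)) (hi _ (cfr A)) (fun x => entry_le (jacobian u x - A) 1 0)
      linarith
  have hupp : ∫ x in Metric.ball (0 : E2) 1,
      frobNorm ((1 / 2 : ℝ) • (jacobian u x + (jacobian u x).transpose)) ≤
      ∫ x in Metric.ball (0 : E2) 1,
        (|jacobian u x 0 0| + |jacobian u x 1 1| + |jacobian u x 0 1 + jacobian u x 1 0|) :=
    integral_mono (hi _ cfs) (hi _ (by fun_prop)) (fun x => sym_le _)
  have hfin : 0 ≤ ∫ x in Metric.ball (0 : E2) 1,
      (4 * C * (|jacobian u x 0 0| + |jacobian u x 1 1| + |jacobian u x 0 1 + jacobian u x 1 0|)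
        - |jacobian u x 0 1| - |jacobian u x 1 0|) := by
    rw [integral_sub (hi _ (by fun_prop)) (hi _ (by fun_prop)),
      integral_sub (hi _ (by fun_prop)) (hi _ (by fun_prop)), integral_const_mul]
    have := mul_le_mul_of_nonneg_left hupp hC.le
    linarith
  have hphi : ∀ x, 4 * C * (|jacobian u x 0 0| + |jacobian u x 1 1| +
      |jacobian u x 0 1 + jacobian u x 1 0|) - |jacobian u x 0 1| - |jacobian u x 1 0| =
      R * phi (4 * C) 0 0 f g (T R x) := by
    intro x
    rw [j00, j01, j10, j11, ← mul_add]
    simp only [abs_mul, abs_of_pos hR0, phi, zero_add]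
    ring
  have hzero : ∀ p : ℝ × ℝ, ¬ (0 < p.1 ∧ p.1 < w ∧ 0 < p.2 ∧ p.2 < h) →
      phi (4 * C) 0 0 f g p = 0 := by
    intro p hp
    simp [phi, zero_fx (hf.2 p hp), zero_fy (hf.2 p hp), zero_fx (hg.2 p hp), zero_fy (hg.2 p hp)]
  simp only [hphi] at hfin
  rw [integral_const_mul, setIntegral_eq_integral_of_forall_compl_eq_zero
      (fun x hx => hzero _ (hout x hx)), int_T R hR0] at hfin
  rw [setIntegral_eq_integral_of_forall_compl_eq_zero]
  · have h1 : 0 < R * (R ^ 2)⁻¹ := by positivity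
    rw [← mul_assoc] at hfin
    exact nonneg_of_mul_nonneg_right hfin h1
  · intro p hp
    apply hzero
    rintro ⟨h1, h2, h3, h4⟩
    exact hp ⟨⟨h1, h2.le⟩, ⟨h3, h4.le⟩⟩

end KornAux

/-- (Ornstein) Failure of Korn's second inequality in `L¹`:
with `Ω` the open unit ball of `ℝ²`, there is no constant `C > 0` such that for all smooth
compactly supported `u` with support in `Ω`,
`inf_{Aᵀ = -A} ∫_Ω ‖Du - A‖_F ≤ C ∫_Ω ‖(Du + Duᵀ)/2‖_F`. -/
theorem korn_second_inequality_fails_L1 :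
    ¬ ∃ C > (0 : ℝ),
      ∀ u : EuclideanSpace ℝ (Fin 2) → EuclideanSpace ℝ (Fin 2),
        ContDiff ℝ (⊤ : ℕ∞) u → HasCompactSupport u →
        tsupport u ⊆ Metric.ball (0 : EuclideanSpace ℝ (Fin 2)) 1 →
        sInf {r : ℝ | ∃ A : Matrix (Fin 2) (Fin 2) ℝ, Aᵀ = -A ∧
            r = ∫ x in Metric.ball (0 : EuclideanSpace ℝ (Fin 2)) 1,
              frobNorm (jacobian u x - A)} ≤
          C * ∫ x in Metric.ball (0 : EuclideanSpace ℝ (Fin 2)) 1,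
            frobNorm ((1 / 2 : ℝ) • (jacobian u x + (jacobian u x)ᵀ)) := by
  rintro ⟨C, hC, H⟩
  exact KornAux.contra (K := 4 * C) (by linarith)
    (fun w h f g hw hh hf hg => KornAux.link C hC H w h f g hw hh hf hg)
end

section
/- Failure of Korn's second inequality in L^∞ (de Leeuw–Mirkil, Mityagin): Let Ω be the open unit ball of ℝ². There exists no constant C > 0 such that for every smooth vector field u : ℝ² → ℝ², the infimum over antisymmetric 2×2 real matrices A of the supremum over x ∈ Ω of ‖Du(x) − A‖_F is bounded by C times the supremum over x ∈ Ω of ‖(Du(x) + Du(x)ᵀ)/2‖_F. Equivalently, for every C > 0 there exists a smooth u : ℝ² → ℝ² with inf_A sup_{x∈Ω} ‖Du(x) − A‖_F > C · sup_{x∈Ω} ‖(Du(x) + Du(x)ᵀ)/2‖_F. -/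
open Matrix

/-- The regularised logarithmic rotation field. -/
noncomputable def kornField (e : ℝ) (x : EuclideanSpace ℝ (Fin 2)) : EuclideanSpace ℝ (Fin 2) :=
  WithLp.toLp 2 ![-(x 1) * Real.log (x 0 ^ 2 + x 1 ^ 2 + e), x 0 * Real.log (x 0 ^ 2 + x 1 ^ 2 + e)]

lemma kornField_contDiff {e : ℝ} (he : 0 < e) : ContDiff ℝ (⊤ : ℕ∞) (kornField e) := by
  have h0 : ∀ i : Fin 2, ContDiff ℝ (⊤ : ℕ∞) (fun x : EuclideanSpace ℝ (Fin 2) => x i) :=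
    fun i => (EuclideanSpace.proj (𝕜 := ℝ) i : EuclideanSpace ℝ (Fin 2) →L[ℝ] ℝ).contDiff
  have hL : ContDiff ℝ (⊤ : ℕ∞) (fun x : EuclideanSpace ℝ (Fin 2) =>
      Real.log (x 0 ^ 2 + x 1 ^ 2 + e)) := by
    apply ContDiff.log
    · exact (((h0 0).pow 2).add ((h0 1).pow 2)).add contDiff_const
    · intro x
      positivity
  rw [contDiff_euclidean]
  intro i
  fin_cases i
  · exact (h0 1).neg.mul hL
  · exact (h0 0).mul hL

lemma jacobian_kornField {e : ℝ} (he : 0 < e) (x : EuclideanSpace ℝ (Fin 2)) :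
    jacobian (kornField e) x =
      !![-(2 * x 0 * x 1) / (x 0 ^ 2 + x 1 ^ 2 + e),
         -Real.log (x 0 ^ 2 + x 1 ^ 2 + e) - 2 * x 1 ^ 2 / (x 0 ^ 2 + x 1 ^ 2 + e);
         Real.log (x 0 ^ 2 + x 1 ^ 2 + e) + 2 * x 0 ^ 2 / (x 0 ^ 2 + x 1 ^ 2 + e),
         2 * x 0 * x 1 / (x 0 ^ 2 + x 1 ^ 2 + e)] := by
  have hs : x 0 ^ 2 + x 1 ^ 2 + e ≠ 0 := by positivity
  have h0 : ∀ i : Fin 2, HasFDerivAt (fun x : EuclideanSpace ℝ (Fin 2) => x i)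
      (EuclideanSpace.proj (𝕜 := ℝ) i : EuclideanSpace ℝ (Fin 2) →L[ℝ] ℝ) x :=
    fun i => (EuclideanSpace.proj (𝕜 := ℝ) i : EuclideanSpace ℝ (Fin 2) →L[ℝ] ℝ).hasFDerivAt
  have hL := ((((h0 0).pow 2).add ((h0 1).pow 2)).add_const e).log hs
  have hd : HasFDerivAt (kornField e) (fderiv ℝ (kornField e) x) x :=
    (((kornField_contDiff he).differentiable (by simp)) x).hasFDerivAt
  have hc : ∀ i : Fin 2, HasFDerivAt (fun y => kornField e y i)
      ((EuclideanSpace.proj (𝕜 := ℝ) i : EuclideanSpace ℝ (Fin 2) →L[ℝ] ℝ).comp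
        (fderiv ℝ (kornField e) x)) x := fun i =>
    (EuclideanSpace.proj (𝕜 := ℝ) i : EuclideanSpace ℝ (Fin 2) →L[ℝ] ℝ).hasFDerivAt.comp x hd
  have e0 := (hc 0).unique ((h0 1).neg.mul hL)
  have e1 := (hc 1).unique ((h0 0).mul hL)
  have f0 : ∀ v, (fderiv ℝ (kornField e) x v) 0 = _ := fun v => DFunLike.congr_fun e0 v
  have f1 : ∀ v, (fderiv ℝ (kornField e) x v) 1 = _ := fun v => DFunLike.congr_fun e1 v
  ext i j
  fin_cases i <;> fin_cases j
  · refine (f0 _).trans ?_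
    simp
    field_simp
  · refine (f0 _).trans ?_
    simp
    field_simp
    ring
  · refine (f1 _).trans ?_
    simp
    field_simp
    ring
  · refine (f1 _).trans ?_
    simp
    field_simp

lemma frobNorm_continuous : Continuous frobNorm := by
  unfold frobNorm
  fun_prop

lemma abs_le_frobNorm (M : Matrix (Fin 2) (Fin 2) ℝ) : |M 1 0| ≤ frobNorm M := by
  unfold frobNorm
  apply Real.abs_le_sqrt
  simp only [Fin.sum_univ_two]
  nlinarith [sq_nonneg (M 0 0), sq_nonneg (M 0 1), sq_nonneg (M 1 1)]

lemma frobNorm_sym_le {e : ℝ} (he : 0 < e) (x : EuclideanSpace ℝ (Fin 2)) :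
    frobNorm ((1 / 2 : ℝ) • (jacobian (kornField e) x + (jacobian (kornField e) x)ᵀ)) ≤ 2 := by
  rw [jacobian_kornField he]
  have hs : 0 < x 0 ^ 2 + x 1 ^ 2 + e := by positivity
  unfold frobNorm
  apply Real.sqrt_le_iff.2 ⟨by norm_num, ?_⟩
  simp [Fin.sum_univ_two]
  generalize x 0 = a at *
  generalize x 1 = b at *
  generalize Real.log (a ^ 2 + b ^ 2 + e) = L
  have key : 2 * ((a ^ 2 + b ^ 2) / (a ^ 2 + b ^ 2 + e)) ^ 2 ≤ 2 ^ 2 := by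
    have h1 : (a ^ 2 + b ^ 2) / (a ^ 2 + b ^ 2 + e) ≤ 1 := by
      rw [div_le_one hs]; linarith
    have h2 : 0 ≤ (a ^ 2 + b ^ 2) / (a ^ 2 + b ^ 2 + e) := by positivity
    nlinarith
  refine le_trans (le_of_eq ?_) key
  field_simp
  ring

lemma le_iSup_frobNorm {u : EuclideanSpace ℝ (Fin 2) → EuclideanSpace ℝ (Fin 2)}
    (hu : ContDiff ℝ (⊤ : ℕ∞) u) (A : Matrix (Fin 2) (Fin 2) ℝ)
    (p : EuclideanSpace ℝ (Fin 2)) (hp : p ∈ Metric.ball (0 : EuclideanSpace ℝ (Fin 2)) 1) :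
    frobNorm (jacobian u p - A) ≤ ⨆ x ∈ Metric.ball (0 : EuclideanSpace ℝ (Fin 2)) 1,
              frobNorm (jacobian u x - A) := by
  have hf : Continuous (fderiv ℝ u) := hu.continuous_fderiv (by simp)
  have hJ : Continuous (jacobian u) := by
    refine continuous_pi fun i => continuous_pi fun j => ?_
    exact (EuclideanSpace.proj (𝕜 := ℝ) i : EuclideanSpace ℝ (Fin 2) →L[ℝ] ℝ).continuous.comp
      (hf.clm_apply continuous_const)
  have hc : Continuous fun x => frobNorm (jacobian u x - A) :=
    frobNorm_continuous.comp (hJ.sub continuous_const)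
  obtain ⟨B, hB⟩ := (isCompact_closedBall (0 : EuclideanSpace ℝ (Fin 2)) 1).bddAbove_image
    hc.continuousOn
  have hb : BddAbove (Set.range fun x => ⨆ _ : x ∈ Metric.ball (0 : EuclideanSpace ℝ (Fin 2)) 1,
              frobNorm (jacobian u x - A)) := by
    refine ⟨max B 0, ?_⟩
    rintro _ ⟨x, rfl⟩
    refine Real.iSup_le (fun hx => ?_) (le_max_right _ _)
    exact (hB ⟨x, Metric.ball_subset_closedBall hx, rfl⟩).trans (le_max_left _ _)
  refine le_trans (le_of_eq ?_) (le_ciSup hb p)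
  simp only [hp, ciSup_unique]

/-- (de Leeuw–Mirkil, Mityagin) Failure of Korn's second inequality in
`L^∞`: with `Ω` the open unit ball of `ℝ²`, there is no constant `C > 0` such that for all
smooth `u : ℝ² → ℝ²`,
`inf_{Aᵀ = -A} sup_{x ∈ Ω} ‖Du(x) - A‖_F ≤ C · sup_{x ∈ Ω} ‖(Du(x) + Du(x)ᵀ)/2‖_F`. -/
theorem korn_second_inequality_fails_Linfty :
    ¬ ∃ C > (0 : ℝ),
      ∀ u : EuclideanSpace ℝ (Fin 2) → EuclideanSpace ℝ (Fin 2),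
        ContDiff ℝ (⊤ : ℕ∞) u →
        sInf {r : ℝ | ∃ A : Matrix (Fin 2) (Fin 2) ℝ, Aᵀ = -A ∧
            r = ⨆ x ∈ Metric.ball (0 : EuclideanSpace ℝ (Fin 2)) 1,
              frobNorm (jacobian u x - A)} ≤
          C * ⨆ x ∈ Metric.ball (0 : EuclideanSpace ℝ (Fin 2)) 1,
            frobNorm ((1 / 2 : ℝ) • (jacobian u x + (jacobian u x)ᵀ)) := by
  rintro ⟨C, hC, h⟩
  obtain ⟨e, he, hle⟩ : ∃ e : ℝ, 0 < e ∧ Real.log e = -(4 * C) - 10 :=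
    ⟨Real.exp (-(4 * C) - 10), Real.exp_pos _, Real.log_exp _⟩
  have hu := kornField_contDiff he
  have h1 := h _ hu
  have hR : (⨆ x ∈ Metric.ball (0 : EuclideanSpace ℝ (Fin 2)) 1,
      frobNorm ((1 / 2 : ℝ) • (jacobian (kornField e) x + (jacobian (kornField e) x)ᵀ))) ≤ 2 :=
    Real.iSup_le (fun x => Real.iSup_le (fun _ => frobNorm_sym_le he x) (by norm_num)) (by norm_num)
  have hRC := mul_le_mul_of_nonneg_left hR hC.le
  refine absurd (h1.trans hRC) (not_le.2 ?_)
  refine lt_of_lt_of_le (show C * 2 < 2 * C + 7 / 2 by linarith) ?_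
  apply le_csInf
  · exact ⟨_, 0, by simp, rfl⟩
  rintro r ⟨A, -, rfl⟩
  have hp0 : (0 : EuclideanSpace ℝ (Fin 2)) ∈ Metric.ball (0 : EuclideanSpace ℝ (Fin 2)) 1 := by
    simp
  have hp1 : (EuclideanSpace.single 0 (1 / 2) : EuclideanSpace ℝ (Fin 2)) ∈
      Metric.ball (0 : EuclideanSpace ℝ (Fin 2)) 1 := by
    rw [mem_ball_zero_iff, EuclideanSpace.norm_single]
    norm_num
  have a0 := (abs_le_frobNorm _).trans (le_iSup_frobNorm hu A _ hp0)
  have a1 := (abs_le_frobNorm _).trans (le_iSup_frobNorm hu A _ hp1)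
  have b0 := (neg_abs_le _).trans' (neg_le_neg a0)
  have b1 := (le_abs_self _).trans a1
  have v0 : jacobian (kornField e) 0 1 0 = Real.log e := by
    rw [jacobian_kornField he]
    simp
  have v1 : -3 ≤ jacobian (kornField e) (EuclideanSpace.single 0 (1 / 2)) 1 0 := by
    rw [jacobian_kornField he]
    simp
    have l1 := Real.one_sub_inv_le_log_of_pos (show (0 : ℝ) < 1 / 4 by norm_num)
    have l2 := Real.log_le_log (show (0 : ℝ) < 1 / 4 by norm_num)
      (show (1 / 4 : ℝ) ≤ (2 ^ 2)⁻¹ + e by norm_num; exact he.le)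
    have l3 : 0 ≤ 2 * (2 ^ 2 : ℝ)⁻¹ / ((2 ^ 2)⁻¹ + e) := by positivity
    norm_num at l1 l2 l3 ⊢
    linarith
  rw [Matrix.sub_apply] at b0 b1
  linarith
end
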